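/- arXiv:2011.04146 — 2 statements merged into one kernel-verified Lean document; each statement's English description precedes it below -/
import Mathlib

section
/- Define f : ℝ → ℝ by f(x) = exp(−x^{−4}) for x > 0 and f(x) = 0 for x ≤ 0. Then f is infinitely differentiable on ℝ, and for every integer j ≥ 1 its j-th derivative satisfies sup_{x∈ℝ} |f^{(j)}(x)| ≤ 20^j · j! · (5j/4)^{5j/4}. -/
/-!
For a polynomial `P` put `F_P(x) = P(x⁻¹) exp(-x⁻⁴)` for `x > 0` and `F_P(x) = 0` for `x ≤ 0`
(`polyGlue P`). Each `F_P` is bounded. Applied to `X² P` this gives `F_P(x) = O(x²)`, so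
`F_P` has derivative `0` at `0`; hence `F_P` is differentiable everywhere, with derivative
`F_{T P}`, where `T P = 4 X⁵ P - X² P'` (`hasDerivAt_polyGlue`). So `f = F_1` is smooth and
`f⁽ʲ⁾ = F_{Tʲ 1}`.

The quantitative part controls the degree and the sum of the absolute values of the coefficients
of a polynomial (`CoeffBound`): `T` raises a degree bound `n` to `n + 5` and multiplies
the coefficient sum by at most `n + 4`. Hence `Tʲ 1` has degree at most `5j` and coefficient sum at
most `∏ i < j, (5i + 4) ≤ 5ʲ j!`. Finally `yᵏ exp(-y⁴) ≤ s ^ s` for `k ≤ n` and `s = n/4 ≥ 1`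
(`pow_mul_exp_le`), and `s = 5j/4` gives the stated bound.
-/

open Polynomial

/-- The function equal to `P(x⁻¹) exp(-x⁻⁴)` for `x > 0` and to `0` for `x ≤ 0`. -/
noncomputable def polyGlue (P : ℝ[X]) (x : ℝ) : ℝ :=
  if 0 < x then P.eval x⁻¹ * Real.exp (-(x ^ 4)⁻¹) else 0

/-- The operator on polynomials induced by differentiating `P(x⁻¹) exp(-x⁻⁴)` in `x`. -/
noncomputable def polyGlueStep (P : ℝ[X]) : ℝ[X] :=
  4 * X ^ 5 * P - X ^ 2 * derivative P

/-- `CoeffBound C n P`: the polynomial `P` is a sum of monomials of degree at most `n` whose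
coefficients have absolute values adding up to at most `C`. The inductive form lets linear
estimates be checked on monomials only. -/
inductive CoeffBound : ℝ → ℕ → ℝ[X] → Prop
  | monomial {C : ℝ} {n k : ℕ} {a : ℝ} (hk : k ≤ n) (ha : |a| ≤ C) :
      CoeffBound C n (Polynomial.monomial k a)
  | add {C D : ℝ} {n : ℕ} {P Q : ℝ[X]} (hP : CoeffBound C n P) (hQ : CoeffBound D n Q) :
      CoeffBound (C + D) n (P + Q)

lemma polyGlue_add (P Q : ℝ[X]) (x : ℝ) :
    polyGlue (P + Q) x = polyGlue P x + polyGlue Q x := by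
  unfold polyGlue
  split_ifs
  · rw [eval_add]; ring
  · simp

/-- The factor `n + 4` collects `4` from the term `4 X⁵ P` and `n` from `X² P'`. -/
lemma CoeffBound.step {C : ℝ} {n : ℕ} {P : ℝ[X]} (h : CoeffBound C n P) :
    CoeffBound ((n + 4) * C) (n + 5) (polyGlueStep P) := by
  induction h with
  | @monomial C n k a hk ha =>
    have key : polyGlueStep (Polynomial.monomial k a)
        = Polynomial.monomial (k + 5) (4 * a) + Polynomial.monomial (k + 1) (-(k * a)) := by
      unfold polyGlueStep
      have h4 : Polynomial.C (4 : ℝ) = 4 := map_ofNat Polynomial.C 4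
      simp only [← C_mul_X_pow_eq_monomial, derivative_C_mul_X_pow]
      rcases k with _ | k
      · simp only [map_mul, h4]; simp
      · simp only [map_mul, map_neg, h4]; simp; ring
    rw [key, show ((n : ℝ) + 4) * C = 4 * C + n * C by ring]
    refine .add (.monomial (by omega) ?_) (.monomial (by omega) ?_)
    · rw [abs_mul]; norm_num; exact ha
    · rw [abs_neg, abs_mul, Nat.abs_cast]
      gcongr
  | @add C D n P Q _ _ hP hQ =>
    rw [mul_add, show polyGlueStep (P + Q) = polyGlueStep P + polyGlueStep Q by
      unfold polyGlueStep; rw [derivative_add]; ring]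
    exact .add hP hQ

lemma coeffBound_iterate (j : ℕ) :
    CoeffBound (∏ i ∈ Finset.range j, (5 * (i : ℝ) + 4)) (5 * j) (polyGlueStep^[j] 1) := by
  induction j with
  | zero => exact .monomial (k := 0) (a := 1) le_rfl (by simp)
  | succ j ih =>
    rw [Function.iterate_succ_apply', Finset.prod_range_succ, mul_comm]
    rw [mul_add_one]
    simpa using ih.step

lemma pow_mul_exp_le {n k : ℕ} (hn : 4 ≤ n) (hk : k ≤ n) {y : ℝ} (hy : 0 < y) :
    y ^ k * Real.exp (-y ^ 4) ≤ ((n : ℝ) / 4) ^ ((n : ℝ) / 4) := by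
  have hs : (1 : ℝ) ≤ (n : ℝ) / 4 := by
    rw [le_div_iff₀ (by norm_num)]; exact_mod_cast (by omega : 1 * 4 ≤ n)
  have hs0 : (0 : ℝ) < (n : ℝ) / 4 := by linarith
  have h1 : (1 : ℝ) ≤ ((n : ℝ) / 4) ^ ((n : ℝ) / 4) := Real.one_le_rpow hs hs0.le
  rcases le_total y 1 with hy1 | hy1
  · calc y ^ k * Real.exp (-y ^ 4) ≤ 1 * 1 := by
          gcongr
          · exact pow_le_one₀ hy.le hy1
          · rw [Real.exp_le_one_iff]; have := pow_pos hy 4; linarith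
      _ ≤ _ := by simpa using h1
  · -- With `t = y ^ 4`, the inequality `t / s ≤ exp (t / s)` raised to the power `s`
    -- reads `t ^ s ≤ s ^ s * exp t`.
    set s : ℝ := (n : ℝ) / 4 with hsdef
    have hyn : y ^ n = (y ^ 4) ^ s := by
      rw [← Real.rpow_natCast y 4, ← Real.rpow_mul hy.le, ← Real.rpow_natCast y n]
      congr 1
      rw [hsdef]; push_cast; ring
    have h2 : y ^ 4 ≤ s * Real.exp (y ^ 4 / s) := by
      have := Real.add_one_le_exp (y ^ 4 / s)
      calc y ^ 4 = s * (y ^ 4 / s) := by field_simp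
        _ ≤ _ := by gcongr; linarith
    have h3 : (y ^ 4) ^ s ≤ s ^ s * Real.exp (y ^ 4) := by
      calc (y ^ 4) ^ s ≤ (s * Real.exp (y ^ 4 / s)) ^ s :=
            Real.rpow_le_rpow (by positivity) h2 hs0.le
        _ = s ^ s * Real.exp (y ^ 4) := by
            rw [Real.mul_rpow hs0.le (Real.exp_pos _).le, ← Real.exp_mul,
              div_mul_cancel₀ _ hs0.ne']
    calc y ^ k * Real.exp (-y ^ 4) ≤ y ^ n * Real.exp (-y ^ 4) := by
          gcongr
      _ ≤ (s ^ s * Real.exp (y ^ 4)) * Real.exp (-y ^ 4) := by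
          rw [hyn]; gcongr
      _ = s ^ s := by rw [mul_assoc, ← Real.exp_add]; simp

lemma CoeffBound.abs_polyGlue_le {C : ℝ} {n : ℕ} {P : ℝ[X]} (h : CoeffBound C n P) (hn : 4 ≤ n)
    (x : ℝ) : |polyGlue P x| ≤ C * ((n : ℝ) / 4) ^ ((n : ℝ) / 4) := by
  induction h with
  | @monomial C n k a hk ha =>
    have hC : 0 ≤ C := (abs_nonneg a).trans ha
    unfold polyGlue
    split_ifs with hx
    · have := pow_mul_exp_le hn hk (inv_pos.2 hx)
      rw [eval_monomial, mul_assoc, abs_mul, ← inv_pow, abs_of_nonneg (a := _ * Real.exp _)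
        (by positivity)]
      gcongr
    · rw [abs_zero]; positivity
  | @add C D n P Q _ _ hP hQ =>
    rw [polyGlue_add, add_mul]
    exact (abs_add_le _ _).trans (add_le_add (hP hn) (hQ hn))

lemma exists_abs_polyGlue_le (P : ℝ[X]) : ∃ K, ∀ x, |polyGlue P x| ≤ K := by
  induction P using Polynomial.induction_on' with
  | add P Q hP hQ =>
    obtain ⟨K, hK⟩ := hP
    obtain ⟨L, hL⟩ := hQ
    refine ⟨K + L, fun x => ?_⟩
    rw [polyGlue_add]
    exact (abs_add_le _ _).trans (add_le_add (hK x) (hL x))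
  | monomial k a =>
    exact ⟨_, (CoeffBound.monomial (le_max_left k 4) le_rfl).abs_polyGlue_le (le_max_right k 4)⟩

lemma hasDerivAt_polyGlue_zero (P : ℝ[X]) : HasDerivAt (polyGlue P) 0 0 := by
  obtain ⟨K, hK⟩ := exists_abs_polyGlue_le (X ^ 2 * P)
  have h0 : polyGlue P 0 = 0 := by simp [polyGlue]
  have hb : ∀ x, |polyGlue P x| ≤ K * x ^ 2 := by
    intro x
    have h : polyGlue P x = polyGlue (X ^ 2 * P) x * x ^ 2 := by
      unfold polyGlue
      split_ifs with hx
      · rw [eval_mul, eval_pow, eval_X]; field_simp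
      · simp
    rw [h, abs_mul, abs_of_nonneg (sq_nonneg x)]
    exact mul_le_mul_of_nonneg_right (hK x) (sq_nonneg x)
  have hO : (fun x => polyGlue P x) =O[nhds 0] fun x : ℝ => x ^ 2 :=
    Asymptotics.IsBigO.of_bound K (.of_forall fun x => by
      simpa [Real.norm_eq_abs] using hb x)
  have ho : (fun x : ℝ => x ^ 2) =o[nhds 0] fun x : ℝ => x := by
    simpa using Asymptotics.isLittleO_pow_pow (𝕜 := ℝ) (show 1 < 2 by norm_num)
  rw [hasDerivAt_iff_isLittleO]
  simpa [h0] using hO.trans_isLittleO ho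

lemma hasDerivAt_polyGlue (P : ℝ[X]) (x : ℝ) :
    HasDerivAt (polyGlue P) (polyGlue (polyGlueStep P) x) x := by
  rcases lt_trichotomy x 0 with hx | rfl | hx
  · have : polyGlue (polyGlueStep P) x = 0 := by simp [polyGlue, hx.le]
    rw [this]
    refine (hasDerivAt_const x (0 : ℝ)).congr_of_eventuallyEq ?_
    filter_upwards [gt_mem_nhds hx] with z hz
    simp [polyGlue, hz.le]
  · have : polyGlue (polyGlueStep P) 0 = 0 := by simp [polyGlue]
    rw [this]
    exact hasDerivAt_polyGlue_zero P
  · have h1 := (P.hasDerivAt x⁻¹).comp x (hasDerivAt_inv hx.ne')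
    have h2 := (((hasDerivAt_pow 4 x).inv (pow_ne_zero 4 hx.ne')).neg).exp
    have h3 := (h1.mul h2).congr_of_eventuallyEq (f₁ := polyGlue P) (by
      filter_upwards [lt_mem_nhds hx] with z hz
      simp [polyGlue, hz])
    refine h3.congr_deriv ?_
    simp only [polyGlue, polyGlueStep, if_pos hx, Function.comp, eval_sub, eval_mul, eval_pow,
      eval_X, eval_ofNat, Pi.inv_apply, Pi.neg_apply]
    field_simp
    ring

lemma iteratedDeriv_polyGlue (j : ℕ) (P : ℝ[X]) :
    iteratedDeriv j (polyGlue P) = polyGlue (polyGlueStep^[j] P) := by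
  induction j with
  | zero => simp
  | succ j ih =>
    rw [iteratedDeriv_succ, ih, Function.iterate_succ_apply']
    exact funext fun x => (hasDerivAt_polyGlue _ x).deriv

lemma prod_le_pow_mul_factorial (j : ℕ) :
    ∏ i ∈ Finset.range j, (5 * (i : ℝ) + 4) ≤ 5 ^ j * (j.factorial : ℝ) := by
  induction j with
  | zero => simp
  | succ j ih =>
    rw [Finset.prod_range_succ, Nat.factorial_succ]
    calc _ ≤ (5 ^ j * (j.factorial : ℝ)) * (5 * ((j : ℝ) + 1)) := by
          gcongr
          linarith
      _ = _ := by push_cast; ring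

/-- The function equal to `exp(−x⁻⁴)` for `x > 0` and to `0` for `x ≤ 0` is infinitely
differentiable on `ℝ`, and for every `j ≥ 1` its `j`-th derivative is bounded by
`20ʲ · j! · (5j/4)^(5j/4)`. -/
theorem smooth_bump_derivative_bound :
    ContDiff ℝ ((⊤ : ℕ∞) : WithTop ℕ∞)
      (fun x : ℝ => if 0 < x then Real.exp (-(x ^ 4)⁻¹) else 0) ∧
    ∀ j : ℕ, 1 ≤ j → ∀ x : ℝ,
      |iteratedDeriv j (fun x : ℝ => if 0 < x then Real.exp (-(x ^ 4)⁻¹) else 0) x|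
        ≤ 20 ^ j * (Nat.factorial j : ℝ) * (5 * (j : ℝ) / 4) ^ (5 * (j : ℝ) / 4) := by
  have hf : (fun x : ℝ => if 0 < x then Real.exp (-(x ^ 4)⁻¹) else 0) = polyGlue 1 := by
    funext x; simp [polyGlue]
  rw [hf]
  refine ⟨contDiff_of_differentiable_iteratedDeriv fun m _ => ?_, fun j hj x => ?_⟩
  · rw [iteratedDeriv_polyGlue]
    exact fun x => (hasDerivAt_polyGlue _ x).differentiableAt
  · rw [iteratedDeriv_polyGlue]
    have h := (coeffBound_iterate j).abs_polyGlue_le (by omega) x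
    push_cast at h
    refine h.trans ?_
    gcongr
    refine (prod_le_pow_mul_factorial j).trans ?_
    gcongr
    norm_num
end

section
/- Define c_0 = 0 and c_{n+1} = 6·c_n + 6. Define families J_n of 2n-tuples of positive integers recursively as follows: J_0 = {()} (the empty tuple); given J_n, for j ∈ {1,…,2n} set J_{n+1}^{j,1} = { (I_1+c_n, …, I_{j-1}+c_n, I_j+c_n, I_j, I_{j+1}, …, I_{2n}, 3c_n+1) : (I_1,…,I_{2n}) ∈ J_n } and J_{n+1}^{2n+1,1} = { (I_1+c_n, …, I_{2n}+c_n, 3c_n+2, 3c_n+1) : (I_1,…,I_{2n}) ∈ J_n }; define J_{n+1}^{j,2} for j ∈ {1,…,2n} and J_{n+1}^{2n+1,2} by the same formulas with the shift 2c_n in place of c_n and with 3c_n+3 in place of 3c_n+2; define J̃_{n+1}^{j,1} and J̃_{n+1}^{j,2} by adding 3c_n+3 to every entry of every tuple of J_{n+1}^{j,1} and J_{n+1}^{j,2} respectively; and set J_{n+1} = ∪_{1≤j≤2n+1} ( J_{n+1}^{j,1} ∪ J_{n+1}^{j,2} ∪ J̃_{n+1}^{j,1} ∪ J̃_{n+1}^{j,2}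 ). Then for every n ≥ 1 and every integer s with 1 ≤ s ≤ c_n, the integer s appears as an entry of at least one tuple of J_n, and there exists a unique index l with 1 ≤ l ≤ 2n such that for every tuple (I_1,…,I_{2n}) ∈ J_n, either I_l = s or s does not appear among the entries I_1,…,I_{2n}. -/
/-!
The depth of `s` can be written down recursively. An entry of a tuple of `J_{n+1}`, reduced by
`3 c_n + 3` if it comes from a shifted family, lies in exactly one of the ranges `[1, c_n]`,
`[c_n + 1, 2 c_n]`, `[2 c_n + 1, 3 c_n]`, `{3 c_n + 1}`, `{3 c_n + 2, 3 c_n + 3}`. In the first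
range it is an unshifted entry of a tuple of `J_n`, moved one place to the right by the repeated
entry; in the next two it is a shifted entry of a tuple of `J_n` at its old place; and `3 c_n + 1`
is always last, `3 c_n + 2` and `3 c_n + 3` always next to last. So the position of an entry is a
function of its value (`Jset_placed`). Hence a value occurs at most once in each tuple and always
at the same position; as every value in `{1, …, c_n}` does occur (`Jset_covers`), that position
is the unique depth.
-/

/-- The sequence `c₀ = 0`, `c_{n+1} = 6·c_n + 6`. -/
def cseq : ℕ → ℕ
  | 0 => 0
  | n + 1 => 6 * cseq n + 6

/-- The families `J_n` of `2n`-tuples (represented as lists, read left to right as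
`(I₁, …, I_{2n})`), defined by the recursive construction of the paper. -/
def Jset : ℕ → Set (List ℕ)
  | 0 => {[]}
  | n + 1 =>
    let c := cseq n
    { L | ∃ I ∈ Jset n,
        (∃ j < 2 * n,
          (L = ((I.take (j + 1)).map (· + c)) ++ I.drop j ++ [3 * c + 1] ∨
           L = ((I.take (j + 1)).map (· + 2 * c)) ++ I.drop j ++ [3 * c + 1] ∨
           L = (((I.take (j + 1)).map (· + c)) ++ I.drop j ++ [3 * c + 1]).map
                  (· + (3 * c + 3)) ∨
           L = (((I.take (j + 1)).map (· + 2 * c)) ++ I.drop j ++ [3 * c + 1]).map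
                  (· + (3 * c + 3)))) ∨
        L = (I.map (· + c)) ++ [3 * c + 2, 3 * c + 1] ∨
        L = (I.map (· + 2 * c)) ++ [3 * c + 3, 3 * c + 1] ∨
        L = ((I.map (· + c)) ++ [3 * c + 2, 3 * c + 1]).map (· + (3 * c + 3)) ∨
        L = ((I.map (· + 2 * c)) ++ [3 * c + 3, 3 * c + 1]).map (· + (3 * c + 3)) }

/-- The depth in `J_{n+1}` of a value `t ≤ 3 c + 3`, where `c = c_n` and `d` is the depth function
of `J_n`. -/
def depthStep (c n : ℕ) (d : ℕ → ℕ) (t : ℕ) : ℕ :=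
  if t ≤ c then d t + 1 else if t ≤ 2 * c then d (t - c) else if t ≤ 3 * c then d (t - 2 * c)
  else if t = 3 * c + 1 then 2 * n + 1 else 2 * n

/-- The depth of a value in `J_n`, `0`-indexed. -/
def depthFn : ℕ → ℕ → ℕ
  | 0, _ => 0
  | n + 1, s =>
    depthStep (cseq n) n (depthFn n) (if s ≤ 3 * cseq n + 3 then s else s - (3 * cseq n + 3))

/-- `L` has length `m`, its entries lie in `{1, …, b}`, and every entry `x` sits at the
(`0`-indexed) position `d x`. -/
def Placed (d : ℕ → ℕ) (m b : ℕ) (L : List ℕ) : Prop :=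
  L.length = m ∧ ∀ k x, L[k]? = some x → 1 ≤ x ∧ x ≤ b ∧ k = d x

lemma placed_repeat {c n : ℕ} {d : ℕ → ℕ} {I : List ℕ} (h : Placed d (2 * n) c I)
    {e : ℕ} (he : e = c ∨ e = 2 * c) {j : ℕ} (hj : j < 2 * n) :
    Placed (depthStep c n d) (2 * n + 2) (3 * c + 3)
      ((I.take (j + 1)).map (· + e) ++ I.drop j ++ [3 * c + 1]) := by
  obtain ⟨hl, hp⟩ := h
  refine ⟨by simp [hl]; omega, fun k x hx => ?_⟩
  have hlen : (I.take (j + 1)).length = j + 1 := by simp [hl]; omega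
  rcases lt_or_ge k (j + 1) with hk | hk
  · rw [List.append_assoc, List.getElem?_append_left (by simp [hl]; omega), List.getElem?_map,
      List.getElem?_take_of_lt hk] at hx
    obtain ⟨y, hy, rfl⟩ := Option.map_eq_some_iff.1 hx
    obtain ⟨h1, h2, h3⟩ := hp _ _ hy
    refine ⟨by omega, by omega, ?_⟩
    unfold depthStep
    rcases he with rfl | rfl
    · rw [if_neg (by omega), if_pos (by omega), Nat.add_sub_cancel]; exact h3
    · rw [if_neg (by omega), if_neg (by omega), if_pos (by omega), Nat.add_sub_cancel]; exact h3
  · rw [List.append_assoc, List.getElem?_append_right (by simp [hl]; omega), List.length_map,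
      hlen] at hx
    rcases lt_or_ge k (2 * n + 1) with hk2 | hk2
    · rw [List.getElem?_append_left (by simp [hl]; omega), List.getElem?_drop] at hx
      obtain ⟨h1, h2, h3⟩ := hp _ _ hx
      refine ⟨by omega, by omega, ?_⟩
      unfold depthStep
      rw [if_pos h2]; omega
    · rw [List.getElem?_append_right (by simp [hl]; omega)] at hx
      simp only [List.length_drop, hl, List.getElem?_singleton] at hx
      split_ifs at hx with h0
      obtain rfl := Option.some.inj hx
      refine ⟨by omega, by omega, ?_⟩
      unfold depthStep
      rw [if_neg (by omega), if_neg (by omega), if_neg (by omega), if_pos rfl]; omega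

lemma placed_last {c n : ℕ} {d : ℕ → ℕ} {I : List ℕ} (h : Placed d (2 * n) c I)
    {e z : ℕ} (he : e = c ∨ e = 2 * c) (hz : z = 3 * c + 2 ∨ z = 3 * c + 3) :
    Placed (depthStep c n d) (2 * n + 2) (3 * c + 3)
      (I.map (· + e) ++ [z, 3 * c + 1]) := by
  obtain ⟨hl, hp⟩ := h
  refine ⟨by simp [hl], fun k x hx => ?_⟩
  rcases lt_or_ge k (2 * n) with hk | hk
  · rw [List.getElem?_append_left (by simp [hl]; omega), List.getElem?_map] at hx
    obtain ⟨y, hy, rfl⟩ := Option.map_eq_some_iff.1 hx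
    obtain ⟨h1, h2, h3⟩ := hp _ _ hy
    refine ⟨by omega, by omega, ?_⟩
    unfold depthStep
    rcases he with rfl | rfl
    · rw [if_neg (by omega), if_pos (by omega), Nat.add_sub_cancel]; exact h3
    · rw [if_neg (by omega), if_neg (by omega), if_pos (by omega), Nat.add_sub_cancel]; exact h3
  · rw [List.getElem?_append_right (by simp [hl]; omega), List.length_map, hl] at hx
    obtain ⟨i, rfl⟩ := Nat.exists_eq_add_of_le hk
    rw [Nat.add_sub_cancel_left] at hx
    unfold depthStep
    match i, hx with
    | 0, hx =>
      obtain rfl : z = x := by simpa using hx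
      refine ⟨by omega, by omega, ?_⟩
      rw [if_neg (by omega), if_neg (by omega), if_neg (by omega), if_neg (by omega)]; omega
    | 1, hx =>
      obtain rfl : 3 * c + 1 = x := by simpa using hx
      refine ⟨by omega, by omega, ?_⟩
      rw [if_neg (by omega), if_neg (by omega), if_neg (by omega), if_pos rfl]
    | i + 2, hx => simp at hx

lemma Placed.lower {d : ℕ → ℕ} {m b : ℕ} {L : List ℕ} (h : Placed d m b L) :
    Placed (fun s => d (if s ≤ b then s else s - b)) m (2 * b) L := by
  refine ⟨h.1, fun k x hx => ?_⟩
  obtain ⟨h1, h2, h3⟩ := h.2 k x hx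
  exact ⟨h1, by omega, by simpa [h2] using h3⟩

lemma Placed.upper {d : ℕ → ℕ} {m b : ℕ} {L : List ℕ} (h : Placed d m b L) :
    Placed (fun s => d (if s ≤ b then s else s - b)) m (2 * b) (L.map (· + b)) := by
  refine ⟨by simpa using h.1, fun k x hx => ?_⟩
  rw [List.getElem?_map] at hx
  obtain ⟨y, hy, rfl⟩ := Option.map_eq_some_iff.1 hx
  obtain ⟨h1, h2, h3⟩ := h.2 k y hy
  refine ⟨by omega, by omega, ?_⟩
  change k = d (if y + b ≤ b then y + b else y + b - b)
  rw [if_neg (by omega), Nat.add_sub_cancel]; exact h3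

lemma Jset_placed (n : ℕ) : ∀ L ∈ Jset n, Placed (depthFn n) (2 * n) (cseq n) L := by
  induction n with
  | zero =>
    rintro L rfl
    exact ⟨rfl, by simp⟩
  | succ n ih =>
    have hb : cseq (n + 1) = 2 * (3 * cseq n + 3) := by simp only [cseq]; ring
    rw [hb]
    rintro L ⟨I, hI, ⟨j, hj, rfl | rfl | rfl | rfl⟩ | rfl | rfl | rfl | rfl⟩
    · exact (placed_repeat (ih I hI) (.inl rfl) hj).lower
    · exact (placed_repeat (ih I hI) (.inr rfl) hj).lower
    · exact (placed_repeat (ih I hI) (.inl rfl) hj).upper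
    · exact (placed_repeat (ih I hI) (.inr rfl) hj).upper
    · exact (placed_last (ih I hI) (.inl rfl) (.inl rfl)).lower
    · exact (placed_last (ih I hI) (.inr rfl) (.inr rfl)).lower
    · exact (placed_last (ih I hI) (.inl rfl) (.inl rfl)).upper
    · exact (placed_last (ih I hI) (.inr rfl) (.inr rfl)).upper

lemma Jset_nonempty (n : ℕ) : (Jset n).Nonempty := by
  induction n with
  | zero => exact ⟨[], rfl⟩
  | succ n ih =>
    obtain ⟨I, hI⟩ := ih
    exact ⟨_, I, hI, .inr (.inl rfl)⟩

/-- Every value of the lower half occurs in a tuple of the unshifted families, and its translate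
in the matching tuple of the shifted ones. -/
lemma Jset_covers_half (n : ℕ) (ih : ∀ s, 1 ≤ s → s ≤ cseq n → ∃ I ∈ Jset n, s ∈ I)
    (t : ℕ) (h1 : 1 ≤ t) (h2 : t ≤ 3 * cseq n + 3) :
    ∃ L, t ∈ L ∧ L ∈ Jset (n + 1) ∧ L.map (· + (3 * cseq n + 3)) ∈ Jset (n + 1) := by
  obtain ⟨I₀, hI₀⟩ := Jset_nonempty n
  rcases le_or_gt t (cseq n) with ha | ha
  · obtain ⟨I, hI, ht⟩ := ih t h1 ha
    have hn : 0 < 2 * n := (Jset_placed n I hI).1 ▸ List.length_pos_of_mem ht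
    -- Repeating at the first position keeps an unshifted copy of the whole tuple.
    exact ⟨(I.take (0 + 1)).map (· + cseq n) ++ I.drop 0 ++ [3 * cseq n + 1], by simp [ht],
      ⟨I, hI, .inl ⟨0, hn, .inl rfl⟩⟩, ⟨I, hI, .inl ⟨0, hn, .inr (.inr (.inl rfl))⟩⟩⟩
  rcases le_or_gt t (2 * cseq n) with hb | hb
  · obtain ⟨I, hI, ht⟩ := ih (t - cseq n) (by omega) (by omega)
    exact ⟨I.map (· + cseq n) ++ [3 * cseq n + 2, 3 * cseq n + 1],
      List.mem_append_left _ (List.mem_map.2 ⟨_, ht, by omega⟩),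
      ⟨I, hI, .inr (.inl rfl)⟩, ⟨I, hI, .inr (.inr (.inr (.inl rfl)))⟩⟩
  rcases le_or_gt t (3 * cseq n) with hc | hc
  · obtain ⟨I, hI, ht⟩ := ih (t - 2 * cseq n) (by omega) (by omega)
    exact ⟨I.map (· + 2 * cseq n) ++ [3 * cseq n + 3, 3 * cseq n + 1],
      List.mem_append_left _ (List.mem_map.2 ⟨_, ht, by omega⟩),
      ⟨I, hI, .inr (.inr (.inl rfl))⟩, ⟨I, hI, .inr (.inr (.inr (.inr rfl)))⟩⟩
  by_cases hd : t = 3 * cseq n + 3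
  · exact ⟨I₀.map (· + 2 * cseq n) ++ [3 * cseq n + 3, 3 * cseq n + 1],
      List.mem_append_right _ (by simp [hd]),
      ⟨I₀, hI₀, .inr (.inr (.inl rfl))⟩, ⟨I₀, hI₀, .inr (.inr (.inr (.inr rfl)))⟩⟩
  · exact ⟨I₀.map (· + cseq n) ++ [3 * cseq n + 2, 3 * cseq n + 1],
      List.mem_append_right _ (by simp only [List.mem_cons]; omega),
      ⟨I₀, hI₀, .inr (.inl rfl)⟩, ⟨I₀, hI₀, .inr (.inr (.inr (.inl rfl)))⟩⟩

lemma Jset_covers (n : ℕ) : ∀ s, 1 ≤ s → s ≤ cseq n → ∃ I ∈ Jset n, s ∈ I := by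
  induction n with
  | zero =>
    intro s h1 h2
    simp only [cseq] at h2
    omega
  | succ n ih =>
    intro s h1 h2
    simp only [cseq] at h2
    rcases le_or_gt s (3 * cseq n + 3) with h | h
    · obtain ⟨L, hs, hL, -⟩ := Jset_covers_half n ih s h1 h
      exact ⟨L, hL, hs⟩
    · obtain ⟨L, hs, -, hL⟩ :=
        Jset_covers_half n ih (s - (3 * cseq n + 3)) (by omega) (by omega)
      exact ⟨_, hL, List.mem_map.2 ⟨_, hs, by omega⟩⟩


/-- Every `s ∈ {1, …, c_n}` appears in some tuple of `J_n`, and there is a unique position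
`l ∈ {1, …, 2n}` (here `0`-indexed, `l < 2n`) such that every tuple of `J_n` either has `s`
at position `l` or does not contain `s` at all: the *depth* of `s` in `J_n`. -/
theorem Jset_depth (n : ℕ) (hn : 1 ≤ n) (s : ℕ) (hs1 : 1 ≤ s) (hs2 : s ≤ cseq n) :
    (∃ I ∈ Jset n, s ∈ I) ∧
    (∃! l : ℕ, l < 2 * n ∧ ∀ I ∈ Jset n, I[l]? = some s ∨ s ∉ I) := by
  obtain ⟨I, hI, hs⟩ := Jset_covers n s hs1 hs2
  obtain ⟨k, hk⟩ := List.mem_iff_getElem?.1 hs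
  have hP := Jset_placed n
  obtain ⟨hlen, hpos⟩ := hP I hI
  have hkd : k = depthFn n s := (hpos k s hk).2.2
  refine ⟨⟨I, hI, hs⟩, k, ⟨?_, fun I' hI' => ?_⟩, fun l hl => ?_⟩
  · rw [← hlen]
    exact (List.getElem?_eq_some_iff.1 hk).1
  · by_cases hs' : s ∈ I'
    · obtain ⟨k', hk'⟩ := List.mem_iff_getElem?.1 hs'
      rw [hkd, ← ((hP I' hI').2 k' s hk').2.2]
      exact .inl hk'
    · exact .inr hs'
  · rcases hl.2 I hI with h | h
    · rw [hkd, (hpos l s h).2.2]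
    · exact absurd hs h
end
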